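/- For every ϱ ∈ (−1,1) and all κ₁, κ₂ ∈ ℝ, the sum over the four sign patterns vanishes: ∑_{ε₁ ∈ {−1,+1}} ∑_{ε₂ ∈ {−1,+1}} g(ε₁·κ₁, ε₂·κ₂, ε₁·ε₂·ϱ) = 0. (This is the regularity condition E[∂L/∂σ₁] = 0 for the one-bit likelihood.) -/

import Mathlib

open MeasureTheory

/-- The Gaussian tail function `Q(a) = ∫_a^∞ φ(t) dt`, where `φ` is the standard
normal density. -/
noncomputable def Qtail (a : ℝ) : ℝ :=
  ∫ t in Set.Ioi a, (1 / Real.sqrt (2 * Real.pi)) * Real.exp (-t ^ 2 / 2)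

/-- The standardized bivariate Gaussian density `f(y₁,y₂|ρ)` with correlation
coefficient `ρ`. -/
noncomputable def biGauss (y₁ y₂ ρ : ℝ) : ℝ :=
  (1 / (2 * Real.pi * Real.sqrt (1 - ρ ^ 2))) *
    Real.exp (-(y₁ ^ 2 - 2 * ρ * y₁ * y₂ + y₂ ^ 2) / (2 * (1 - ρ ^ 2)))

/-- The orthant probability `p₁₂(a,b,ρ) = ∫_a^∞ ∫_b^∞ f(y₁,y₂|ρ) dy₂ dy₁`. -/
noncomputable def orthantProb (a b ρ : ℝ) : ℝ :=
  ∫ y₁ in Set.Ioi a, ∫ y₂ in Set.Ioi b, biGauss y₁ y₂ ρ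

/-- The function `g(κ₁,κ₂,ϱ)` from the paper. -/
noncomputable def gFun (κ₁ κ₂ ϱ : ℝ) : ℝ :=
  (κ₁ / Real.sqrt (2 * Real.pi)) * Real.exp (-κ₁ ^ 2 / 2) *
      Qtail ((κ₂ - ϱ * κ₁) / Real.sqrt (1 - ϱ ^ 2))
    - ϱ * biGauss κ₁ κ₂ ϱ

/-! Reflecting the first coordinate of a centred Gaussian pair flips the sign of the correlation.
Accordingly `(κ₁, ϱ) ↦ (-κ₁, -ϱ)` preserves the density and the argument of `Q`, hence negates `g`,
and for each fixed `ε₂` the two terms `ε₁ = ±1` cancel. -/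

theorem biGauss_neg_fst_neg_corr (y₁ y₂ ρ : ℝ) : biGauss (-y₁) y₂ (-ρ) = biGauss y₁ y₂ ρ := by
  simp only [biGauss, neg_sq, mul_neg, neg_mul, neg_neg]

theorem gFun_neg_fst_neg_corr (κ₁ κ₂ ϱ : ℝ) : gFun (-κ₁) κ₂ (-ϱ) = -gFun κ₁ κ₂ ϱ := by
  simp only [gFun, biGauss_neg_fst_neg_corr, neg_sq, neg_mul_neg]
  ring

theorem odd_gFun_mul_fst_mul_corr (κ₁ κ₂ ϱ : ℝ) :
    Function.Odd fun ε : ℝ ↦ gFun (ε * κ₁) κ₂ (ε * ϱ) := by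
  intro ε
  simp only [neg_mul, gFun_neg_fst_neg_corr]

/-- For every `ϱ ∈ (−1,1)` and all `κ₁, κ₂ ∈ ℝ`, the sum of
`g(ε₁·κ₁, ε₂·κ₂, ε₁·ε₂·ϱ)` over the four sign patterns `ε₁, ε₂ ∈ {−1,+1}` vanishes.
(Regularity condition `E[∂L/∂σ₁] = 0` for the one-bit likelihood.) -/
theorem gFun_sign_sum_eq_zero (ϱ : ℝ) (hϱ : ϱ ∈ Set.Ioo (-1 : ℝ) 1) (κ₁ κ₂ : ℝ) :
    ∑ ε₁ ∈ ({-1, 1} : Finset ℝ), ∑ ε₂ ∈ ({-1, 1} : Finset ℝ),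
        gFun (ε₁ * κ₁) (ε₂ * κ₂) (ε₁ * ε₂ * ϱ) = 0 := by
  have signs_symm : Finset.map (Equiv.neg ℝ).toEmbedding {-1, 1} = {-1, 1} := by
    simp [Finset.pair_comm]
  rw [Finset.sum_comm]
  refine Finset.sum_eq_zero fun ε₂ _ ↦ ?_
  simp only [mul_assoc]
  exact (odd_gFun_mul_fst_mul_corr κ₁ (ε₂ * κ₂) (ε₂ * ϱ)).finsetSum_eq_zero signs_symm
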